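/- Let a, b : Fin k → C ⊕ N be two facts and let canonical(a), canonical(b) : Fin k → C ⊕ (Fin k) be their canonicalizations. Then a and b are isomorphic if and only if canonical(a) = canonical(b). -/

import Mathlib

open Classical

/-- An isomorphism from a fact `a` over nulls `N` to a fact `b` over nulls `N'`:
a function on terms fixing constants, mapping nulls to nulls, injective on the
terms occurring in `a`, with `θ (a i) = b i` at every position. -/
def IsFactIso {C N N' : Type*} {k : ℕ} (a : Fin k → C ⊕ N) (b : Fin k → C ⊕ N')
    (θ : C ⊕ N → C ⊕ N') : Prop :=
  (∀ c : C, θ (Sum.inl c) = Sum.inl c) ∧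
  (∀ ν : N, ∃ ν' : N', θ (Sum.inr ν) = Sum.inr ν') ∧
  Set.InjOn θ {t | ∃ i : Fin k, a i = t} ∧
  (∀ i : Fin k, θ (a i) = b i)

/-- The least index `j : Fin k` with `a j = a i`. -/
noncomputable def leastIdx {C N : Type*} {k : ℕ} (a : Fin k → C ⊕ N) (i : Fin k) : Fin k :=
  (Finset.univ.filter (fun j => a j = a i)).min' ⟨i, by simp⟩

/-- The canonicalization of a fact: constants are kept, and each null `a i` is
replaced by the canonical null `Sum.inr j`, where `j` is the least index with
`a j = a i`. -/
noncomputable def canonical {C N : Type*} {k : ℕ} (a : Fin k → C ⊕ N) :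
    Fin k → C ⊕ (Fin k) :=
  fun i => match a i with
  | Sum.inl c => Sum.inl c
  | Sum.inr _ => Sum.inr (leastIdx a i)

theorem leastIdx_spec {C N : Type*} {k : ℕ} (a : Fin k → C ⊕ N) (i : Fin k) :
    a (leastIdx a i) = a i := by
  have h := Finset.min'_mem (Finset.univ.filter (fun j => a j = a i)) ⟨i, by simp⟩
  exact (Finset.mem_filter.mp h).2

theorem leastIdx_congr {C N N' : Type*} {k : ℕ} (a : Fin k → C ⊕ N) (b : Fin k → C ⊕ N')
    (i i' : Fin k) (h : ∀ j, a j = a i ↔ b j = b i') : leastIdx a i = leastIdx b i' := by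
  unfold leastIdx
  congr 1
  ext j
  simp [h j]

theorem canonical_inl {C N : Type*} {k : ℕ} (a : Fin k → C ⊕ N) (i : Fin k) (c : C) :
    canonical a i = Sum.inl c ↔ a i = Sum.inl c := by
  unfold canonical
  cases h : a i <;> simp

theorem canonical_inr {C N : Type*} {k : ℕ} (a : Fin k → C ⊕ N) (i : Fin k) (n : N)
    (h : a i = Sum.inr n) : canonical a i = Sum.inr (leastIdx a i) := by
  unfold canonical
  simp [h]

theorem canonical_eq_iff {C N : Type*} {k : ℕ} (a : Fin k → C ⊕ N) (i j : Fin k) :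
    canonical a i = canonical a j ↔ a i = a j := by
  constructor
  · intro h
    rcases hi : a i with c | n
    · rw [(canonical_inl a i c).2 hi] at h
      exact ((canonical_inl a j c).1 h.symm).symm
    · rcases hj : a j with c | m
      · rw [(canonical_inl a j c).2 hj, canonical_inl, hi] at h
        exact h
      · rw [canonical_inr a i n hi, canonical_inr a j m hj] at h
        rw [← hi, ← hj, ← leastIdx_spec a i, ← leastIdx_spec a j, Sum.inr.inj h]
  · intro h
    have hl : leastIdx a i = leastIdx a j := leastIdx_congr a a i j (by simp [h])
    unfold canonical
    rw [h, hl]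

/-- Two facts are isomorphic iff their canonicalizations are equal. -/
theorem fact_iso_iff_canonical_eq {C N : Type*} {k : ℕ} (a b : Fin k → C ⊕ N) :
    (∃ θ : C ⊕ N → C ⊕ N, IsFactIso a b θ) ↔ canonical a = canonical b := by
  constructor
  · rintro ⟨θ, hc, hn, hinj, hab⟩
    funext i
    rcases hi : a i with c | n
    · rw [(canonical_inl a i c).2 hi, eq_comm, canonical_inl, ← hab i, hi, hc]
    · obtain ⟨m, hm⟩ := hn n
      have hb : b i = Sum.inr m := by rw [← hab i, hi, hm]
      rw [canonical_inr a i n hi, canonical_inr b i m hb]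
      congr 1
      apply leastIdx_congr
      intro j
      rw [← hab i, ← hab j]
      exact ⟨fun h => by rw [h], fun h => hinj ⟨j, rfl⟩ ⟨i, rfl⟩ h⟩
  · intro h
    have key : ∀ i j, a i = a j ↔ b i = b j := fun i j => by
      rw [← canonical_eq_iff a, ← canonical_eq_iff b, h]
    have keyc : ∀ i c, a i = Sum.inl c ↔ b i = Sum.inl c := fun i c => by
      rw [← canonical_inl a, ← canonical_inl b, h]
    let θ : C ⊕ N → C ⊕ N := fun t => if ht : ∃ i, a i = t then b ht.choose else t
    have hθ : ∀ i, θ (a i) = b i := fun i => by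
      have ht : ∃ j, a j = a i := ⟨i, rfl⟩
      simp only [θ, dif_pos ht]
      exact (key _ _).1 ht.choose_spec
    have hθ' : ∀ t, (¬ ∃ i, a i = t) → θ t = t := fun t ht => by
      simp only [θ, dif_neg ht]
    refine ⟨θ, ?_, ?_, ?_, hθ⟩
    · intro c
      by_cases ht : ∃ i, a i = Sum.inl c
      · obtain ⟨i, hi⟩ := ht
        rw [← hi, hθ, hi, ← keyc, hi]
      · exact hθ' _ ht
    · intro n
      by_cases ht : ∃ i, a i = Sum.inr n
      · obtain ⟨i, hi⟩ := ht
        rw [← hi, hθ]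
        rcases hb : b i with c | m
        · rw [← keyc, hi] at hb
          cases hb
        · exact ⟨m, rfl⟩
      · exact ⟨n, hθ' _ ht⟩
    · rintro _ ⟨i, rfl⟩ _ ⟨j, rfl⟩ hij
      rw [hθ, hθ] at hij
      exact (key i j).2 hij
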